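/- arXiv:1401.5571 — 2 statements merged into one kernel-verified Lean document; each statement's English description precedes it below -/
import Mathlib

section
/- Let B be a separable Banach space, let μ₀ be a Borel probability measure on B which is Gaussian (in the sense that every continuous linear functional pushes μ₀ forward to a Gaussian measure on ℝ), fix y ∈ ℝ^J, and let Φ: B × ℝ^J → ℝ be continuous and satisfy the bound 0 ≤ Φ(u;y) ≤ |y|_Γ² + C² exp(2‖u‖_B) for a constant C > 0 and all u ∈ B. Then Z := ∫_B exp(−Φ(u;y)) μ₀(du) satisfies 0 < Z ≤ 1, and μ^y(A) := Z^{-1} ∫_A exp(−Φ(u;y)) μ₀(du) defines a Borel probability measure on B absolutely continuous with respect to μ₀ with dμ^y/dμ₀ = Z^{-1} exp(−Φ(·;y)). -/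
open Real Matrix MeasureTheory ProbabilityTheory

/-- The covariance-weighted norm `|z|_Γ = |Γ^{-1/2} z|`, equivalently `|z|_Γ² = ⟨z, Γ⁻¹ z⟩`. -/
noncomputable def covNorm {J : ℕ} (Γ : Matrix (Fin J) (Fin J) ℝ) (z : Fin J → ℝ) : ℝ :=
  Real.sqrt (z ⬝ᵥ (Γ⁻¹ *ᵥ z))

/-- **Existence of the Bayesian posterior with a Gaussian prior on a separable Banach space.**
Let `B` be a separable Banach space, `μ₀` a Gaussian Borel probability measure on `B`
(every continuous linear functional pushes `μ₀` forward to a Gaussian measure on `ℝ`),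
and `Φ : B × ℝ^J → ℝ` continuous with `0 ≤ Φ(u;y) ≤ |y|_Γ² + C² exp(2‖u‖)`.  Then
`Z = ∫ exp(−Φ(u;y)) dμ₀ ∈ (0,1]` and `μ^y = Z⁻¹ exp(−Φ(·;y)) μ₀` is a Borel probability
measure absolutely continuous with respect to `μ₀` with density `Z⁻¹ exp(−Φ(·;y))`. -/
theorem posterior_well_defined_gaussian_prior
    {B : Type*} [NormedAddCommGroup B] [NormedSpace ℝ B] [CompleteSpace B]
    [TopologicalSpace.SeparableSpace B] [MeasurableSpace B] [BorelSpace B]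
    {J : ℕ} (Γ : Matrix (Fin J) (Fin J) ℝ) (hΓ : Γ.PosDef) (hΓsymm : Γ.IsSymm)
    (μ₀ : Measure B) [IsProbabilityMeasure μ₀]
    (hGaussian : ∀ ℓ : B →L[ℝ] ℝ, ∃ (m : ℝ) (v : NNReal),
      μ₀.map ℓ = gaussianReal m v)  -- μ₀ is Gaussian
    (y : Fin J → ℝ)
    (Φ : B × (Fin J → ℝ) → ℝ) (hΦcont : Continuous Φ)
    (C : ℝ) (hC : 0 < C)
    (hΦ_nonneg : ∀ u : B, 0 ≤ Φ (u, y))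
    (hΦ_bound : ∀ u : B, Φ (u, y) ≤ (covNorm Γ y) ^ 2 + C ^ 2 * Real.exp (2 * ‖u‖)) :
    0 < ∫ u, Real.exp (-(Φ (u, y))) ∂μ₀ ∧
    (∫ u, Real.exp (-(Φ (u, y))) ∂μ₀) ≤ 1 ∧
    IsProbabilityMeasure (μ₀.withDensity (fun u => ENNReal.ofReal
      ((∫ u', Real.exp (-(Φ (u', y))) ∂μ₀)⁻¹ * Real.exp (-(Φ (u, y)))))) ∧
    (μ₀.withDensity (fun u => ENNReal.ofReal
      ((∫ u', Real.exp (-(Φ (u', y))) ∂μ₀)⁻¹ * Real.exp (-(Φ (u, y)))))) ≪ μ₀ ∧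
    (μ₀.withDensity (fun u => ENNReal.ofReal
        ((∫ u', Real.exp (-(Φ (u', y))) ∂μ₀)⁻¹ * Real.exp (-(Φ (u, y)))))).rnDeriv μ₀
      =ᵐ[μ₀] fun u => ENNReal.ofReal
        ((∫ u', Real.exp (-(Φ (u', y))) ∂μ₀)⁻¹ * Real.exp (-(Φ (u, y)))) := by
  have hcont : Continuous fun u : B => Real.exp (-(Φ (u, y))) := by fun_prop
  have hint : Integrable (fun u : B => Real.exp (-(Φ (u, y)))) μ₀ := by
    refine Integrable.of_bound hcont.measurable.aestronglyMeasurable 1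
      (Filter.Eventually.of_forall fun u => ?_)
    rw [Real.norm_eq_abs, abs_of_pos (Real.exp_pos _), Real.exp_le_one_iff]
    linarith [hΦ_nonneg u]
  have hpos : 0 < ∫ u, Real.exp (-(Φ (u, y))) ∂μ₀ := integral_exp_pos hint
  have hle : (∫ u, Real.exp (-(Φ (u, y))) ∂μ₀) ≤ 1 := by
    have h := integral_mono hint (integrable_const (1 : ℝ)) (fun u => by
      show Real.exp (-(Φ (u, y))) ≤ 1
      rw [Real.exp_le_one_iff]
      linarith [hΦ_nonneg u])
    simpa using h
  have hmeas : Measurable fun u : B => ENNReal.ofReal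
      ((∫ u', Real.exp (-(Φ (u', y))) ∂μ₀)⁻¹ * Real.exp (-(Φ (u, y)))) :=
    (hcont.measurable.const_mul _).ennreal_ofReal
  refine ⟨hpos, hle, ⟨?_⟩, withDensity_absolutelyContinuous _ _,
    Measure.rnDeriv_withDensity _ hmeas⟩
  rw [withDensity_apply _ MeasurableSet.univ, Measure.restrict_univ,
    ← ofReal_integral_eq_lintegral_ofReal (hint.const_mul _)
      (Filter.Eventually.of_forall fun u => by positivity),
    integral_const_mul, inv_mul_cancel₀ hpos.ne', ENNReal.ofReal_one]
end

section
/- Let (U, 𝒜, μ₀) be a probability space, Γ a symmetric positive definite J×J matrix, and 𝒢: U → ℝ^J measurable. For y ∈ ℝ^J define Φ(u;y) = ½|y − 𝒢(u)|_Γ², and for r > 0 set M(r,u) := r + |𝒢(u)|_Γ. Assume ∫_U M(r,u)² μ₀(du) < ∞ and that Z(y) := ∫_U exp(−Φ(u;y)) μ₀(du) > 0 for all |y|_Γ ≤ r. Let μ^y denote the probability measure with dμ^y/dμ₀ = Z(y)^{-1} exp(−Φ(·;y)). Then for every r > 0 there exist constants C₁ = C₁(r), C₂ = C₂(r) such that for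 all y, y' with max{|y|_Γ, |y'|_Γ} < r: d_TV(μ^y, μ^{y'}) ≤ C₁ |y − y'|_Γ and d_Hell(μ^y, μ^{y'}) ≤ C₂ |y − y'|_Γ. -/
open Real Matrix MeasureTheory

/-- The model–data misfit `Φ(u;y) = ½ |y − 𝒢(u)|_Γ²`. -/
noncomputable def misfit {U : Type*} {J : ℕ} (Γ : Matrix (Fin J) (Fin J) ℝ)
    (G : U → Fin J → ℝ) (u : U) (y : Fin J → ℝ) : ℝ :=
  (covNorm Γ (y - G u)) ^ 2 / 2

/-- The density `Z(y)⁻¹ exp(−Φ(u;y))` of the Bayesian posterior `μ^y` with respect to the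
prior `μ₀`, where `Z(y) = ∫ exp(−Φ(u;y)) dμ₀`. -/
noncomputable def postDensity {U : Type*} [MeasurableSpace U] {J : ℕ}
    (Γ : Matrix (Fin J) (Fin J) ℝ) (G : U → Fin J → ℝ) (μ₀ : Measure U)
    (y : Fin J → ℝ) (u : U) : ℝ :=
  (∫ u', Real.exp (-(misfit Γ G u' y)) ∂μ₀)⁻¹ * Real.exp (-(misfit Γ G u y))

open scoped MatrixOrder Matrix.Norms.L2Operator in
theorem covNorm_exists_repr {J : ℕ} (Γ : Matrix (Fin J) (Fin J) ℝ) (hΓ : Γ.PosDef) :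
    ∃ B : Matrix (Fin J) (Fin J) ℝ, ∀ z, covNorm Γ z = ‖WithLp.toLp 2 (B *ᵥ z)‖ := by
  obtain ⟨B, hB⟩ := CStarAlgebra.nonneg_iff_eq_star_mul_self.mp hΓ.inv.posSemidef.nonneg
  refine ⟨B, fun z => ?_⟩
  rw [EuclideanSpace.norm_eq, covNorm, hB, ← Matrix.mulVec_mulVec, Matrix.dotProduct_mulVec,
    Matrix.star_eq_conjTranspose, Matrix.conjTranspose_eq_transpose_of_trivial,
    Matrix.vecMul_transpose]
  congr 1
  simp [dotProduct, pow_two]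

theorem abs_exp_neg_sub_le {x y : ℝ} (hx : 0 ≤ x) (hy : 0 ≤ y) :
    |rexp (-x) - rexp (-y)| ≤ |x - y| := by
  have key : ∀ a b : ℝ, 0 ≤ a → a ≤ b → rexp (-a) - rexp (-b) ≤ b - a := by
    intro a b ha hab
    have h1 : rexp (-b) = rexp (-a) * rexp (-(b - a)) := by rw [← Real.exp_add]; ring_nf
    have h2 := Real.add_one_le_exp (-(b - a))
    have h3 : rexp (-a) ≤ 1 := Real.exp_le_one_iff.mpr (by linarith)
    have h4 := Real.exp_pos (-a)
    rw [h1]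
    nlinarith
  rcases le_total x y with h | h
  · rw [abs_of_nonneg (sub_nonneg.mpr (Real.exp_le_exp.mpr (by linarith))),
      abs_of_nonpos (by linarith)]
    linarith [key x y hx h]
  · rw [abs_of_nonpos (sub_nonpos.mpr (Real.exp_le_exp.mpr (by linarith))),
      abs_of_nonneg (by linarith)]
    linarith [key y x hy h]

/-- Elementary estimate for normalised quantities. -/
theorem abs_inv_mul_sub_le {c Z Z' e e' A B : ℝ} (hc : 0 < c) (hZ : c ≤ Z) (hZ' : c ≤ Z')
    (he0 : 0 ≤ e') (he1 : e' ≤ 1) (hA : |e - e'| ≤ A) (hB : |Z - Z'| ≤ B) :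
    |Z⁻¹ * e - Z'⁻¹ * e'| ≤ A / c + B / c ^ 2 := by
  have hZp : 0 < Z := by linarith
  have hZp' : 0 < Z' := by linarith
  have h1 : Z⁻¹ * e - Z'⁻¹ * e' = (e - e') / Z + e' * ((Z' - Z) / (Z * Z')) := by
    field_simp
    ring
  have hB0 : 0 ≤ B := (abs_nonneg _).trans hB
  have hA0 : 0 ≤ A := (abs_nonneg _).trans hA
  rw [h1]
  refine (abs_add_le _ _).trans (add_le_add ?_ ?_)
  · rw [abs_div, abs_of_pos hZp]
    gcongr
  · rw [abs_mul, abs_of_nonneg he0, abs_div, abs_of_pos (mul_pos hZp hZp'), abs_sub_comm]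
    have : |Z - Z'| / (Z * Z') ≤ B / c ^ 2 := by
      rw [pow_two]
      gcongr
    have h0 : 0 ≤ |Z - Z'| / (Z * Z') := by positivity
    nlinarith

theorem abs_sqrt_sub_le {c Z Z' B : ℝ} (hc : 0 < c) (hZ : c ≤ Z) (hZ' : c ≤ Z')
    (hB : |Z - Z'| ≤ B) : |√Z - √Z'| ≤ B / √c := by
  have hs : 0 < √c := Real.sqrt_pos.mpr hc
  have h1 : √c ≤ √Z := Real.sqrt_le_sqrt hZ
  have h2 : √c ≤ √Z' := Real.sqrt_le_sqrt hZ'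
  rw [le_div_iff₀ hs]
  have h3 : |Z - Z'| = |√Z - √Z'| * (√Z + √Z') := by
    rw [← abs_of_pos (show 0 < √Z + √Z' by linarith), ← abs_mul]
    congr 1
    have := Real.sq_sqrt (show 0 ≤ Z by linarith)
    have := Real.sq_sqrt (show 0 ≤ Z' by linarith)
    nlinarith
  have := abs_nonneg (√Z - √Z')
  nlinarith

/-- **Lipschitz well-posedness of the Bayesian posterior in the data.**
Let `(U, 𝒜, μ₀)` be a probability space, `Γ` symmetric positive definite, `𝒢` measurable,
`Φ(u;y) = ½|y − 𝒢(u)|_Γ²` and `M(r,u) = r + |𝒢(u)|_Γ`.  If `∫ M(r,u)² dμ₀ < ∞` and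
`Z(y) > 0` for `|y|_Γ ≤ r`, then there are `C₁(r), C₂(r)` such that for all data
`y, y'` with `max{|y|_Γ, |y'|_Γ} < r`, the posteriors satisfy
`d_TV(μ^y, μ^{y'}) ≤ C₁|y − y'|_Γ` and `d_Hell(μ^y, μ^{y'}) ≤ C₂|y − y'|_Γ`,
the distances being computed via the posterior densities with respect to the prior `μ₀`. -/
theorem posterior_lipschitz_wellPosedness
    {U : Type*} [MeasurableSpace U] (μ₀ : Measure U) [IsProbabilityMeasure μ₀]
    {J : ℕ} (Γ : Matrix (Fin J) (Fin J) ℝ) (hΓ : Γ.PosDef) (hΓsymm : Γ.IsSymm)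
    (G : U → Fin J → ℝ) (hGmeas : Measurable G)
    (r : ℝ) (hr : 0 < r)
    (hM2 : Integrable (fun u => (r + covNorm Γ (G u)) ^ 2) μ₀)
    (hZ : ∀ y : Fin J → ℝ, covNorm Γ y ≤ r →
      0 < ∫ u, Real.exp (-(misfit Γ G u y)) ∂μ₀) :
    ∃ C₁ C₂ : ℝ, ∀ y y' : Fin J → ℝ, covNorm Γ y < r → covNorm Γ y' < r →
      ((1 / 2) * ∫ u, |postDensity Γ G μ₀ y u - postDensity Γ G μ₀ y' u| ∂μ₀
          ≤ C₁ * covNorm Γ (y - y')) ∧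
      (Real.sqrt ((1 / 2) * ∫ u,
            (Real.sqrt (postDensity Γ G μ₀ y u) -
              Real.sqrt (postDensity Γ G μ₀ y' u)) ^ 2 ∂μ₀)
          ≤ C₂ * covNorm Γ (y - y')) := by
  obtain ⟨B, hB⟩ := covNorm_exists_repr Γ hΓ
  have hnn : ∀ z, 0 ≤ covNorm Γ z := fun z => Real.sqrt_nonneg _
  have hsub : ∀ a b, covNorm Γ (a - b) ≤ covNorm Γ a + covNorm Γ b := by
    intro a b
    rw [hB, hB, hB, Matrix.mulVec_sub, WithLp.toLp_sub]
    exact norm_sub_le _ _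
  have hrev : ∀ a b, |covNorm Γ a - covNorm Γ b| ≤ covNorm Γ (a - b) := by
    intro a b
    rw [hB, hB, hB, Matrix.mulVec_sub, WithLp.toLp_sub]
    exact abs_norm_sub_norm_le _ _
  have hcont : Continuous (covNorm Γ) := by
    unfold covNorm
    fun_prop
  have hmeas : ∀ y, Measurable (fun u => misfit Γ G u y) := by
    intro y
    unfold misfit
    exact ((hcont.measurable.comp (measurable_const.sub hGmeas)).pow_const 2).div_const 2
  have hphi0 : ∀ u y, 0 ≤ misfit Γ G u y := fun u y => by unfold misfit; positivity
  set M : U → ℝ := fun u => r + covNorm Γ (G u) with hMdef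
  have hM0 : ∀ u, 0 ≤ M u := fun u => add_nonneg hr.le (hnn _)
  have hMmeas : Measurable M := measurable_const.add (hcont.measurable.comp hGmeas)
  have hM2' : Integrable (fun u => M u ^ 2) μ₀ := hM2
  have hM1 : Integrable M μ₀ := by
    refine (hM2'.add (integrable_const (1 : ℝ))).mono' hMmeas.aestronglyMeasurable
      (Filter.Eventually.of_forall fun u => ?_)
    rw [Real.norm_of_nonneg (hM0 u)]
    simp only [Pi.add_apply]
    nlinarith [sq_nonneg (M u - 1), hM0 u]
  have hint : ∀ f : U → ℝ, Measurable f → (∀ u, 0 ≤ f u) →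
      Integrable (fun u => rexp (-(f u))) μ₀ := by
    intro f hf hf0
    refine (integrable_const (1 : ℝ)).mono' (hf.neg.exp).aestronglyMeasurable
      (Filter.Eventually.of_forall fun u => ?_)
    rw [Real.norm_of_nonneg (Real.exp_pos _).le]
    exact Real.exp_le_one_iff.mpr (by linarith [hf0 u])
  have hinte := fun y => hint (fun u => misfit Γ G u y) (hmeas y) (fun u => hphi0 u y)
  have hintc := hint (fun u => M u ^ 2 / 2) ((hMmeas.pow_const 2).div_const 2)
    (fun u => by positivity)
  set c : ℝ := ∫ u, rexp (-(M u ^ 2 / 2)) ∂μ₀ with hcdef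
  have hc : 0 < c := integral_exp_pos hintc
  set m : ℝ := ∫ u, M u ∂μ₀ with hmdef
  have hyM : ∀ y u, covNorm Γ y < r → covNorm Γ (y - G u) ≤ M u := by
    intro y u hy
    have := hsub y (G u)
    simp only [hMdef]
    linarith
  have hcZ : ∀ y, covNorm Γ y < r → c ≤ ∫ u, rexp (-(misfit Γ G u y)) ∂μ₀ := by
    intro y hy
    refine integral_mono hintc (hinte y) fun u => ?_
    have h1 := hyM y u hy
    have h2 := hnn (y - G u)
    apply Real.exp_le_exp.mpr
    unfold misfit
    nlinarith
  have hphi : ∀ y y' u, covNorm Γ y < r → covNorm Γ y' < r →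
      |misfit Γ G u y - misfit Γ G u y'| ≤ covNorm Γ (y - y') * M u := by
    intro y y' u hy hy'
    have h1 := hyM y u hy
    have h2 := hyM y' u hy'
    have h3 := hrev (y - G u) (y' - G u)
    rw [sub_sub_sub_cancel_right] at h3
    have h4 := hnn (y - G u)
    have h5 := hnn (y' - G u)
    have h6 : misfit Γ G u y - misfit Γ G u y' = (covNorm Γ (y - G u) - covNorm Γ (y' - G u)) *
        ((covNorm Γ (y - G u) + covNorm Γ (y' - G u)) / 2) := by
      unfold misfit
      ring
    rw [h6, abs_mul, abs_of_nonneg (show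
      0 ≤ (covNorm Γ (y - G u) + covNorm Γ (y' - G u)) / 2 by positivity)]
    exact mul_le_mul h3 (by linarith) (by positivity) (hnn _)
  have hZdiff : ∀ y y', covNorm Γ y < r → covNorm Γ y' < r →
      |(∫ u, rexp (-(misfit Γ G u y)) ∂μ₀) - ∫ u, rexp (-(misfit Γ G u y')) ∂μ₀|
        ≤ covNorm Γ (y - y') * m := by
    intro y y' hy hy'
    rw [← integral_sub (hinte y) (hinte y'), hmdef, ← integral_const_mul]
    refine (abs_integral_le_integral_abs).trans ?_
    refine integral_mono ((hinte y).sub (hinte y')).abs (hM1.const_mul _) fun u => ?_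
    exact (abs_exp_neg_sub_le (hphi0 u y) (hphi0 u y')).trans (hphi y y' u hy hy')
  have hsqrtexp : ∀ x : ℝ, √(rexp (-x)) = rexp (-(x / 2)) := by
    intro x
    rw [← neg_div, Real.exp_half]
  have hsc : 0 < √c := Real.sqrt_pos.mpr hc
  refine ⟨(1 / 2) * ∫ u, (M u / c + m / c ^ 2) ∂μ₀,
    √((1 / 2) * ∫ u, (2 * (M u ^ 2 / c) + 2 * (m / √c / √c ^ 2) ^ 2) ∂μ₀),
    fun y y' hy hy' => ⟨?_, ?_⟩⟩
  · rw [mul_assoc]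
    refine mul_le_mul_of_nonneg_left ?_ (by norm_num)
    rw [← integral_mul_const]
    refine integral_mono_of_nonneg (Filter.Eventually.of_forall fun u => abs_nonneg _)
      (((hM1.div_const c).add (integrable_const _)).mul_const _)
      (Filter.Eventually.of_forall fun u => ?_)
    have h := abs_inv_mul_sub_le hc (hcZ y hy) (hcZ y' hy') (Real.exp_pos (-misfit Γ G u y')).le
      (Real.exp_le_one_iff.mpr (by linarith [hphi0 u y']))
      ((abs_exp_neg_sub_le (hphi0 u y) (hphi0 u y')).trans (hphi y y' u hy hy'))
      (hZdiff y y' hy hy')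
    refine h.trans (le_of_eq ?_)
    simp only []
    ring
  · have hd := hnn (y - y')
    set d := covNorm Γ (y - y') with hddef
    rw [← Real.sqrt_sq hd, ← Real.sqrt_mul' _ (sq_nonneg d)]
    apply Real.sqrt_le_sqrt
    rw [mul_assoc]
    refine mul_le_mul_of_nonneg_left ?_ (by norm_num)
    rw [← integral_mul_const]
    refine integral_mono_of_nonneg (Filter.Eventually.of_forall fun u => sq_nonneg _)
      ((((hM2'.div_const c).const_mul 2).add (integrable_const _)).mul_const _)
      (Filter.Eventually.of_forall fun u => ?_)
    have hp := hphi0 u y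
    have hp' := hphi0 u y'
    have hA : |rexp (-(misfit Γ G u y / 2)) - rexp (-(misfit Γ G u y' / 2))| ≤ d * M u := by
      refine (abs_exp_neg_sub_le (by positivity) (by positivity)).trans ?_
      rw [← sub_div, abs_div, abs_of_pos (show (0 : ℝ) < 2 by norm_num)]
      have := hphi y y' u hy hy'
      have := abs_nonneg (misfit Γ G u y - misfit Γ G u y')
      linarith
    have h := abs_inv_mul_sub_le hsc (Real.sqrt_le_sqrt (hcZ y hy)) (Real.sqrt_le_sqrt (hcZ y' hy'))
      (Real.exp_pos (-(misfit Γ G u y' / 2))).le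
      (Real.exp_le_one_iff.mpr (by linarith)) hA
      (abs_sqrt_sub_le hc (hcZ y hy) (hcZ y' hy') (hZdiff y y' hy hy'))
    have hpd : ∀ y, √(postDensity Γ G μ₀ y u) =
        (√(∫ u, rexp (-(misfit Γ G u y)) ∂μ₀))⁻¹ * rexp (-(misfit Γ G u y / 2)) := by
      intro y
      unfold postDensity
      rw [Real.sqrt_mul' _ (Real.exp_pos _).le, Real.sqrt_inv, hsqrtexp]
    simp only [hpd]
    have h2 := pow_le_pow_left₀ (abs_nonneg _) h 2
    rw [sq_abs] at h2
    refine h2.trans ?_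
    have h3 : d * M u / √c + d * m / √c / √c ^ 2 = d * (M u / √c + m / √c / √c ^ 2) := by ring
    have h4 : M u ^ 2 / c = (M u / √c) ^ 2 := by rw [div_pow, Real.sq_sqrt hc.le]
    rw [h3, h4, mul_pow, mul_comm]
    refine mul_le_mul_of_nonneg_right ?_ (sq_nonneg d)
    nlinarith [sq_nonneg (M u / √c - m / √c / √c ^ 2)]
end
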